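/- (Ito, 1953) Let G be a finite group whose set of conjugacy class sizes is N(G) = {1, n} for some integer n > 1. Then n is a power of some prime p, and G is nilpotent; more precisely, G is the direct product of a p-group A and an abelian group B whose order is coprime to p. -/

import Mathlib

/-- The index of an element `x` of a group `G`: the size of its conjugacy class,
`|x^G| = |G : C_G(x)|`. -/
noncomputable def classSize {G : Type*} [Group G] (x : G) : ℕ :=
  (Subgroup.centralizer {x}).index

/-- The `p`-index of `x`: the `p`-part of `|x^G|`. -/
noncomputable def pIndex (p : ℕ) {G : Type*} [Group G] (x : G) : ℕ :=
  p ^ ((classSize x).factorization p)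

/-- `G` is `p`-index extremal (`G ∈ R(p)`): the set `N(G)_p` of `p`-indices of elements of `G`
contains exactly one nontrivial element. -/
def IsPIndexExtremal (p : ℕ) (G : Type*) [Group G] : Prop :=
  ∃! a : ℕ, a ≠ 1 ∧ ∃ x : G, pIndex p x = a

/-- `x` is a `p`-element: its order is a power of `p`. -/
def IsPElement (p : ℕ) {G : Type*} [Group G] (x : G) : Prop :=
  ∃ k : ℕ, orderOf x = p ^ k

/-! Let `Z` be the centre of `G`. If all noncentral classes have size `n`, then `m = |C(x) : Z|` is
the same for all noncentral `x`, and no two centralizers of noncentral elements are properly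
nested. When `x` and `y` commute and have coprime orders, `x` is a power of `x * y`, so this gives
`C(x) = C(x * y) ≤ C(y)`; playing elements of coprime orders against each other shows that either
some `C(x) / Z` is a `p`-group or all `C(x)` are abelian.

In the abelian case distinct `C(x)` meet in `Z`, whence `m ≤ n`. For a prime `p` dividing
`|G : Z|`, choose a noncentral `x` in a Sylow `p`-subgroup `P` which is central in `P` modulo `Z`.
Then `P` normalizes `C(x)`, and for a prime `q ≠ p`, conjugating an element of order `q` modulo `Z`
embeds the cosets of `C(x) ∩ P` in `P` into the nontrivial elements of order `q` of the abelian
group `C(x) / Z`, so the `p`-part of `n` is smaller than the `q`-part of `m`. If `m` had two prime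
factors, multiplying these inequalities along a cyclic permutation of its primes would give `n < m`.

So `m` is a power of a prime `p` in all cases, `G / Z` is a `p`-group, and a complement of the
Sylow `p`-subgroup consists of central elements. -/

open Subgroup
open scoped commutatorElement

theorem prod_lt_prod_of_forall_ne_lt {ι R : Type*} [CommMonoidWithZero R] [PartialOrder R]
    [ZeroLEOneClass R] [PosMulStrictMono R] [Nontrivial R] {s : Finset ι} {f g : ι → R}
    (hs : (s : Set ι).Nontrivial) (hf : ∀ i ∈ s, 0 < f i)
    (h : ∀ i ∈ s, ∀ j ∈ s, i ≠ j → f i < g j) : ∏ i ∈ s, f i < ∏ i ∈ s, g i := by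
  obtain ⟨σ, hσ, hσs⟩ := s.countable_toSet.exists_cycleOn
  calc ∏ i ∈ s, f i
    _ < ∏ i ∈ s, g (σ i) := Finset.prod_lt_prod_of_nonempty hf
        (fun i hi ↦ h i hi (σ i) (hσ.1.mapsTo hi) (hσ.apply_ne hs hi).symm) hs.nonempty
    _ = ∏ i ∈ s, g i := σ.prod_comp s g hσs

theorem isPrimePow_of_ordProj_lt_ordProj {m n : ℕ} (hm₀ : m ≠ 0) (hm₁ : m ≠ 1) (hmn : m ≤ n)
    (hfactors : n.primeFactors ⊆ m.primeFactors)
    (h : ∀ p ∈ m.primeFactors, ∀ q ∈ m.primeFactors, p ≠ q → ordProj[p] n < ordProj[q] m) :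
    IsPrimePow m := by
  rw [isPrimePow_iff_card_primeFactors_eq_one]
  by_contra hcard
  have hnontrivial : (m.primeFactors : Set ℕ).Nontrivial := by
    have hcard₀ : m.primeFactors.card ≠ 0 := by
      simpa only [Ne, Finset.card_eq_zero, Nat.primeFactors_eq_empty, not_or] using ⟨hm₀, hm₁⟩
    exact Finset.one_lt_card_iff_nontrivial.1 (by lia)
  refine hmn.not_gt ?_
  calc n
    _ = ∏ p ∈ n.primeFactors, ordProj[p] n :=
      (Nat.prod_factorization_pow_eq_self (by lia)).symm
    _ = ∏ p ∈ m.primeFactors, ordProj[p] n :=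
      Finset.prod_subset hfactors fun p _ hp ↦ by
        rw [Finsupp.notMem_support_iff.1 hp, pow_zero]
    _ < ∏ p ∈ m.primeFactors, ordProj[p] m :=
      prod_lt_prod_of_forall_ne_lt hnontrivial (fun p _ ↦ Nat.ordProj_pos n p) h
    _ = m := Nat.prod_factorization_pow_eq_self hm₀

section Group

variable {G : Type*} [Group G]

theorem mem_of_pow_mem_of_coprime {H : Subgroup G} {x : G} {a b : ℕ} (hab : a.Coprime b)
    (ha : x ^ a ∈ H) (hb : x ^ b ∈ H) : x ∈ H := by
  obtain ⟨u, v, huv⟩ := Nat.isCoprime_iff_coprime.2 hab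
  have hx : x = (x ^ a) ^ u * (x ^ b) ^ v := by
    rw [← zpow_natCast, ← zpow_natCast, ← zpow_mul, ← zpow_mul, ← zpow_add, mul_comm (a : ℤ),
      mul_comm (b : ℤ), huv, zpow_one]
  rw [hx]
  exact H.mul_mem (H.zpow_mem ha u) (H.zpow_mem hb v)

theorem orderOf_pow_ordProj (p : ℕ) (x : G) :
    orderOf (x ^ ordProj[p] (orderOf x)) = ordCompl[p] (orderOf x) :=
  orderOf_pow_of_dvd (Nat.ordProj_pos _ p).ne' (Nat.ordProj_dvd _ p)

theorem orderOf_pow_ordCompl [Finite G] (p : ℕ) (x : G) :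
    orderOf (x ^ ordCompl[p] (orderOf x)) = ordProj[p] (orderOf x) := by
  have hx : orderOf x ≠ 0 := (orderOf_pos x).ne'
  rw [orderOf_pow_of_dvd (Nat.ordCompl_pos p hx).ne' (Nat.ordCompl_dvd _ p),
    Nat.div_div_self (Nat.ordProj_dvd _ p) hx]

theorem exists_isPElement_mem_zpowers_notMem [Finite G] {N : Subgroup G} [N.Normal] {x : G}
    (hx : x ∉ N) : ∃ p, p.Prime ∧ ∃ y ∈ zpowers x, IsPElement p y ∧ y ∉ N := by
  have hx₁ : orderOf (x : G ⧸ N) ≠ 1 := by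
    rwa [Ne, orderOf_eq_one_iff, QuotientGroup.eq_one_iff]
  obtain ⟨p, hp, hpx⟩ := Nat.exists_prime_and_dvd hx₁
  refine ⟨p, hp, x ^ ordCompl[p] (orderOf x), npow_mem_zpowers x _, ⟨_, orderOf_pow_ordCompl p x⟩,
    fun hN ↦ ?_⟩
  rw [← QuotientGroup.eq_one_iff, QuotientGroup.mk_pow] at hN
  exact Nat.not_dvd_ordCompl hp (orderOf_pos x).ne' (hpx.trans (orderOf_dvd_of_pow_eq_one hN))

theorem exists_notMem_forall_commutator_mem {p : ℕ} [Fact p.Prime] {P N : Subgroup G} [Finite P]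
    [N.Normal] (hP : IsPGroup p P) (hPN : ¬P ≤ N) :
    ∃ x ∈ P, x ∉ N ∧ ∀ g ∈ P, ⁅g, x⁆ ∈ N := by
  have : Nontrivial (P.map (QuotientGroup.mk' N)) := by
    rwa [nontrivial_iff_ne_bot, Ne, Subgroup.map_eq_bot_iff, QuotientGroup.ker_mk']
  have : Finite (P.map (QuotientGroup.mk' N)) :=
    .of_surjective _ ((QuotientGroup.mk' N).subgroupMap_surjective P)
  have := (hP.map (QuotientGroup.mk' N)).center_nontrivial
  obtain ⟨⟨⟨_, x, hxP, rfl⟩, hx⟩, hx₁⟩ := exists_ne (1 : center (P.map (QuotientGroup.mk' N)))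
  refine ⟨x, hxP, fun hxN ↦ hx₁ ?_, fun g hg ↦ ?_⟩
  · exact Subtype.ext (Subtype.ext ((QuotientGroup.eq_one_iff x).2 hxN))
  · have hgx := congrArg Subtype.val (mem_center_iff.1 hx ⟨g, g, hg, rfl⟩)
    rw [← QuotientGroup.eq_one_iff]
    exact (map_commutatorElement (QuotientGroup.mk' N) g x).trans
      (commutatorElement_eq_one_iff_mul_comm.2 hgx)

theorem commutator_pow_eq_one {g w : G} {b : ℕ} (hw : w ^ b ∈ center G) (hgw : ⁅g, w⁆ ∈ center G) :
    ⁅g, w⁆ ^ b = 1 := by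
  have hconj : ⁅g, w⁆ * w = g * w * g⁻¹ := by group
  have hcomm : Commute ⁅g, w⁆ w := (mem_center_iff.1 hgw w).symm
  have hpow : ⁅g, w⁆ ^ b * w ^ b = w ^ b := by
    rw [← hcomm.mul_pow, hconj, conj_pow, mem_center_iff.1 hw, mul_inv_cancel_right]
  exact mul_eq_right.1 hpow

theorem commute_of_commutator_mem_center {g w : G} {a b : ℕ} (hab : a.Coprime b)
    (hg : g ^ a ∈ center G) (hw : w ^ b ∈ center G) (hgw : ⁅g, w⁆ ∈ center G) : Commute g w := by
  have hwg : ⁅w, g⁆ ∈ center G := by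
    rw [← commutatorElement_inv]
    exact inv_mem hgw
  have ha : ⁅g, w⁆ ^ a = 1 := by
    rw [← commutatorElement_inv, inv_pow, commutator_pow_eq_one hg hwg, inv_one]
  have hb := commutator_pow_eq_one hw hgw
  rw [← commutatorElement_eq_one_iff_commute, ← pow_one ⁅g, w⁆, ← hab.gcd_eq_one]
  exact pow_gcd_eq_one.2 ⟨ha, hb⟩

theorem commute_inv_mul_of_conj_mul_conj_mem_center {g h y : G} {a b : ℕ} (hab : a.Coprime b)
    (hgh : (g⁻¹ * h) ^ a ∈ center G) (hy : y ^ b ∈ center G)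
    (hconj : (g * y * g⁻¹)⁻¹ * (h * y * h⁻¹) ∈ center G) : Commute (g⁻¹ * h) y := by
  refine commute_of_commutator_mem_center hab hgh hy ?_
  convert Normal.conj_mem inferInstance _ hconj (y * g⁻¹) using 1
  group

theorem mem_normalizer_centralizer_of_commutator_mem_center {g x : G} (hgx : ⁅g, x⁆ ∈ center G) :
    g ∈ normalizer (centralizer {x} : Set G) := by
  have hconj : g * x * g⁻¹ = ⁅g, x⁆ * x := by group
  have hcentral (t : G) : Commute t ⁅g, x⁆ := mem_center_iff.1 hgx t
  refine mem_normalizer_iff.2 fun t ↦ ?_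
  simp only [mem_centralizer_singleton_iff]
  change Commute t x ↔ Commute (g * t * g⁻¹) x
  rw [← Commute.conj_iff g, hconj]
  refine ⟨fun h ↦ ?_, fun h ↦ (hcentral _).mul_right h⟩
  exact inv_mul_cancel_left ⁅g, x⁆ x ▸ (hcentral _).inv_right.mul_right h

theorem relIndex_lt_card_of_notMem_range {H K : Subgroup G} {T : Type*} [Finite T] (f : K → T)
    (hf : ∀ g h : K, f g = f h → (g : G)⁻¹ * h ∈ H) {t : T} (ht : t ∉ Set.range f) :
    H.relIndex K < Nat.card T := by
  have hinj : Function.Injective fun c : K ⧸ H.subgroupOf K ↦ f c.out := fun c d hcd ↦ by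
    rw [← c.out_eq', ← d.out_eq', QuotientGroup.eq]
    exact hf _ _ hcd
  have := Finite.of_injective _ hinj
  have := Fintype.ofFinite T
  have := Fintype.ofFinite (K ⧸ H.subgroupOf K)
  rw [relIndex, index_eq_card, Nat.card_eq_fintype_card, Nat.card_eq_fintype_card]
  exact Fintype.card_lt_of_injective_of_notMem _ hinj fun ⟨c, hc⟩ ↦ ht ⟨c.out, hc⟩

theorem pow_relIndex_mem {H K : Subgroup G} [(H.subgroupOf K).Normal] {x : G} (hx : x ∈ K) :
    x ^ H.relIndex K ∈ H :=
  (H.subgroupOf K).pow_index_mem ⟨x, hx⟩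

theorem exists_mem_notMem_pow_mem [Finite G] {H K : Subgroup G} [(H.subgroupOf K).Normal] {p : ℕ}
    (hp : p.Prime) (hpK : p ∣ H.relIndex K) : ∃ y ∈ K, y ∉ H ∧ y ^ p ∈ H := by
  have := Fact.mk hp
  obtain ⟨c, hc⟩ := exists_prime_orderOf_dvd_card' (G := K ⧸ H.subgroupOf K) p hpK
  obtain ⟨⟨y, hyK⟩, rfl⟩ := QuotientGroup.mk_surjective c
  rw [orderOf_eq_prime_iff, ← QuotientGroup.mk_pow, Ne, QuotientGroup.eq_one_iff,
    QuotientGroup.eq_one_iff] at hc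
  exact ⟨y, hyK, hc.2, hc.1⟩

theorem card_ker_powMonoidHom_le_ordProj {A : Type*} [CommGroup A] [Finite A] {q : ℕ}
    (hq : q.Prime) : Nat.card (powMonoidHom q : A →* A).ker ≤ ordProj[q] (Nat.card A) := by
  have := Fact.mk hq
  have hT : IsPGroup q (powMonoidHom q : A →* A).ker := fun t ↦
    ⟨1, Subtype.ext ((congrArg (t.1 ^ ·) (pow_one q)).trans t.2)⟩
  obtain ⟨k, hk⟩ := hT.exists_card_eq
  have hdvd : q ^ k ∣ Nat.card A := hk ▸ card_subgroup_dvd_card _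
  rw [hk]
  exact Nat.pow_le_pow_right hq.pos
    ((hq.pow_dvd_iff_le_factorization Nat.card_pos.ne').1 hdvd)

theorem relIndex_lt_ordProj_card {A : Type*} [CommGroup A] [Finite A] {q : ℕ} (hq : q.Prime)
    {H K : Subgroup G} (f : K → A) (hf : ∀ g h : K, f g = f h → (g : G)⁻¹ * h ∈ H)
    (hfq : ∀ g, f g ^ q = 1) (hf₁ : ∀ g, f g ≠ 1) : H.relIndex K < ordProj[q] (Nat.card A) := by
  let φ (g : K) : (powMonoidHom q : A →* A).ker := ⟨f g, hfq g⟩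
  have hφ₁ : 1 ∉ Set.range φ := fun ⟨g, hg⟩ ↦ hf₁ g (congrArg Subtype.val hg)
  exact (relIndex_lt_card_of_notMem_range φ (fun g h hgh ↦ hf g h (congrArg Subtype.val hgh))
    hφ₁).trans_le (card_ker_powMonoidHom_le_ordProj hq)

theorem ordProj_index_dvd_relIndex [Finite G] {p : ℕ} [Fact p.Prime] (P : Sylow p G)
    (H : Subgroup G) : ordProj[p] H.index ∣ H.relIndex P := by
  have hdvd : H.index ∣ H.relIndex P * P.index := by
    rw [← inf_relIndex_right, relIndex_mul_index inf_le_right]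
    exact index_dvd_of_le inf_le_left
  have hcop : (ordProj[p] H.index).Coprime P.index :=
    ((Nat.Prime.coprime_iff_not_dvd Fact.out).2 P.not_dvd_index).pow_left _
  exact hcop.dvd_of_dvd_mul_right ((Nat.ordProj_dvd _ p).trans hdvd)

theorem mem_centralizer_self (x : G) : x ∈ centralizer {x} :=
  mem_centralizer_singleton_iff.2 rfl

theorem relIndex_ne_one_of_notMem_center {x : G} (hx : x ∉ center G) :
    (center G).relIndex (centralizer {x}) ≠ 1 := fun h ↦
  hx (relIndex_eq_one.1 h (mem_centralizer_self x))

theorem relIndex_mul_classSize (x : G) :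
    (center G).relIndex (centralizer {x}) * classSize x = (center G).index :=
  relIndex_mul_index (center_le_centralizer {x})

theorem classSize_ne_zero [Finite G] (x : G) : classSize x ≠ 0 :=
  index_ne_zero_of_finite

theorem classSize_eq_one_iff {x : G} : classSize x = 1 ↔ x ∈ center G := by
  rw [classSize, index_eq_one, centralizer_eq_top_iff_subset, Set.singleton_subset_iff,
    SetLike.mem_coe]

theorem isNilpotent_of_isPGroup_quotient_center [Finite G] {p : ℕ} [Fact p.Prime]
    (h : IsPGroup p (G ⧸ center G)) : Group.IsNilpotent G :=
  Group.of_quotient_center_nilpotent h.isNilpotent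

theorem exists_isCompl_isPGroup_le_center [Finite G] {p : ℕ} [Fact p.Prime]
    (h : IsPGroup p (G ⧸ center G)) :
    ∃ A B : Subgroup G, A.Normal ∧ B ≤ center G ∧ IsCompl A B ∧ IsPGroup p A ∧
      (Nat.card B).Coprime p := by
  have hG := isNilpotent_of_isPGroup_quotient_center h
  obtain ⟨P⟩ : Nonempty (Sylow p G) := inferInstance
  have hP : (P : Subgroup G).Normal := inferInstance
  obtain ⟨B, hPB⟩ := exists_right_complement'_of_coprime P.card_coprime_index
  have hBp : (Nat.card B).Coprime p := by
    rw [← hPB.symm.index_eq_card, Nat.coprime_comm, Nat.Prime.coprime_iff_not_dvd Fact.out]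
    exact P.not_dvd_index
  have hB : B ≤ center G := fun b hb ↦ by
    obtain ⟨k, hk⟩ := h b
    rw [← QuotientGroup.mk_pow, QuotientGroup.eq_one_iff] at hk
    have hcop : (p ^ k).Coprime (orderOf b) :=
      (hBp.symm.pow_left k).coprime_dvd_right (B.orderOf_dvd_natCard hb)
    obtain ⟨j, hj⟩ := exists_pow_eq_self_of_coprime hcop
    exact hj ▸ pow_mem hk j
  exact ⟨P, B, hP, hB, hPB.isCompl, P.isPGroup', hBp⟩

/-- F-groups, in Ito's sense: no centralizer of a noncentral element is properly contained in
another one. This holds as soon as the noncentral classes all have the same size. -/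
def IsFGroup (G : Type*) [Group G] : Prop :=
  ∀ x ∉ center G, ∀ y ∉ center G, centralizer {x} ≤ centralizer {y} →
    centralizer {x} = centralizer {y}

namespace IsFGroup

theorem centralizer_le_of_coprime (hG : IsFGroup G) {x y : G} (hx : x ∉ center G)
    (hxy : Commute x y) (hcop : (orderOf x).Coprime (orderOf y)) :
    centralizer {x} ≤ centralizer {y} := by
  obtain ⟨j, hj⟩ : ∃ j, ((x * y) ^ orderOf y) ^ j = x := by
    rw [hxy.mul_pow, pow_orderOf_eq_one, mul_one]
    exact exists_pow_eq_self_of_coprime hcop.symm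
  have hxy_notMem : x * y ∉ center G := fun h ↦ hx (hj ▸ pow_mem (pow_mem h _) j)
  have hle : centralizer {x * y} ≤ centralizer {x} := fun t ht ↦ by
    rw [mem_centralizer_singleton_iff] at ht ⊢
    rw [← hj]
    exact ((show Commute t (x * y) from ht).pow_right _).pow_right j
  intro t ht
  have htxy : Commute t (x * y) := by
    rwa [← hG _ hxy_notMem _ hx hle, mem_centralizer_singleton_iff] at ht
  have htx : Commute t x := mem_centralizer_singleton_iff.1 ht
  rw [mem_centralizer_singleton_iff, ← inv_mul_cancel_left x y]
  exact htx.inv_right.mul_right htxy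

variable [Finite G]

theorem isMulCommutative_centralizer (hG : IsFGroup G) {p : ℕ} (hp : p.Prime) {y v : G}
    (hy : y ∉ center G) (hyp : IsPElement p y) (hv : v ∉ center G)
    (hvp : p.Coprime (orderOf v)) (hyv : Commute y v) : IsMulCommutative (centralizer {y}) := by
  obtain ⟨k, hk⟩ := hyp
  have hyv_cop : (orderOf y).Coprime (orderOf v) := hk ▸ hvp.pow_left k
  have hle : centralizer {y} ≤ centralizer {v} := hG.centralizer_le_of_coprime hy hyv hyv_cop
  refine ⟨⟨fun ⟨s, hs⟩ ⟨t, ht⟩ ↦ Subtype.ext ?_⟩⟩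
  have hys : Commute y s := (mem_centralizer_singleton_iff.1 hs).symm
  have hvs : Commute v s := (mem_centralizer_singleton_iff.1 (hle hs)).symm
  have hcop : p.Coprime (ordCompl[p] (orderOf s)) := Nat.coprime_ordCompl hp (orderOf_pos s).ne'
  have hs_p : t ∈ centralizer {s ^ ordCompl[p] (orderOf s)} :=
    hG.centralizer_le_of_coprime hv (hvs.pow_right _)
      (by rw [orderOf_pow_ordCompl]; exact (hvp.pow_left _).symm) (hle ht)
  have hs_p' : t ∈ centralizer {s ^ ordProj[p] (orderOf s)} :=
    hG.centralizer_le_of_coprime hy (hys.pow_right _)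
      (by rw [orderOf_pow_ordProj, hk]; exact hcop.pow_left k) ht
  rw [mem_centralizer_singleton_iff, eq_comm, ← mem_centralizer_singleton_iff] at hs_p hs_p'
  exact mem_centralizer_singleton_iff.1
    (mem_of_pow_mem_of_coprime (hcop.pow_left _) hs_p' hs_p)

theorem isMulCommutative_or_isPGroup (hG : IsFGroup G) {x : G} (hx : x ∉ center G) :
    IsMulCommutative (centralizer {x}) ∨
      ∃ p, p.Prime ∧ IsPGroup p (centralizer {x} ⧸ (center G).subgroupOf (centralizer {x})) := by
  obtain ⟨p, hp, y, hyx, hyp, hy⟩ := exists_isPElement_mem_zpowers_notMem hx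
  have hle : centralizer {x} ≤ centralizer {y} := fun t ht ↦ by
    obtain ⟨k, rfl⟩ := mem_zpowers_iff.1 hyx
    exact mem_centralizer_singleton_iff.2
      (Commute.zpow_right (mem_centralizer_singleton_iff.1 ht) k)
  rw [hG x hx y hy hle]
  by_cases! h : ∃ v ∉ center G, p.Coprime (orderOf v) ∧ Commute y v
  · obtain ⟨v, hv, hvp, hyv⟩ := h
    exact .inl (hG.isMulCommutative_centralizer hp hy hyp hv hvp hyv)
  · refine .inr ⟨p, hp, fun c ↦ ?_⟩
    obtain ⟨⟨w, hw⟩, rfl⟩ := QuotientGroup.mk_surjective c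
    refine ⟨(orderOf w).factorization p, ?_⟩
    rw [← QuotientGroup.mk_pow, QuotientGroup.eq_one_iff, mem_subgroupOf]
    by_contra hwp
    refine h _ hwp ?_ (Commute.pow_right (mem_centralizer_singleton_iff.1 hw).symm _)
    change p.Coprime (orderOf (w ^ ordProj[p] (orderOf w)))
    rw [orderOf_pow_ordProj]
    exact Nat.coprime_ordCompl hp (orderOf_pos w).ne'

end IsFGroup

/-- AC-groups: the centralizers of noncentral elements are abelian. In such a group, distinct
centralizers of noncentral elements meet in the centre. -/
def IsACGroup (G : Type*) [Group G] : Prop :=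
  ∀ x ∉ center G, IsMulCommutative (centralizer {x})

namespace IsACGroup

theorem centralizer_eq (hG : IsACGroup G) {x y : G} (hx : x ∉ center G) (hy : y ∉ center G)
    (hxy : Commute x y) : centralizer {x} = centralizer {y} := by
  have hle {u v : G} (hu : u ∉ center G) (huv : Commute u v) :
      centralizer {u} ≤ centralizer {v} := fun t ht ↦ by
    have := hG u hu
    exact mem_centralizer_singleton_iff.2
      (setLike_mul_comm ht (mem_centralizer_singleton_iff.2 huv.symm))
  exact (hle hx hxy).antisymm (hle hy hxy.symm)

theorem index_center_le (hG : IsACGroup G) {x y : G} (hxy : ¬Commute x y) :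
    (center G).index ≤ classSize x * classSize y := by
  have hy : y ∉ center G := fun hy ↦ hxy (mem_center_iff.1 hy x)
  have hinf : centralizer {x} ⊓ centralizer {y} = center G := by
    refine le_antisymm (fun w ⟨hwx, hwy⟩ ↦ by_contra fun hw ↦ hxy ?_)
      (le_inf (center_le_centralizer _) (center_le_centralizer _))
    have hxw : x ∈ centralizer {w} :=
      mem_centralizer_singleton_iff.2 (mem_centralizer_singleton_iff.1 hwx).symm
    rw [hG.centralizer_eq hw hy (mem_centralizer_singleton_iff.1 hwy)] at hxw
    exact mem_centralizer_singleton_iff.1 hxw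
  rw [← hinf]
  exact index_inf_le

variable [Finite G]

open scoped IsMulCommutative in
theorem relIndex_lt_ordProj (hG : IsACGroup G) {p q : ℕ} (hp : p.Prime) (hq : q.Prime)
    (hpq : p ≠ q) {P : Subgroup G} (hP : IsPGroup p P) {x : G} (hx : x ∉ center G)
    (hPx : P ≤ normalizer (centralizer {x} : Set G))
    (hqx : q ∣ (center G).relIndex (centralizer {x})) :
    (centralizer {x}).relIndex P < ordProj[q] ((center G).relIndex (centralizer {x})) := by
  have := hG x hx
  obtain ⟨y, hyx, hy, hyq⟩ := exists_mem_notMem_pow_mem hq hqx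
  have hconj (g : P) : (g : G) * y * (g : G)⁻¹ ∈ centralizer {x} :=
    (mem_normalizer_iff.1 (hPx g.2) y).1 hyx
  refine relIndex_lt_ordProj_card hq
    (fun g : P ↦ (QuotientGroup.mk ⟨_, hconj g⟩ :
      centralizer {x} ⧸ (center G).subgroupOf (centralizer {x})))
    (fun g h hgh ↦ ?_) (fun g ↦ ?_) (fun g hg ↦ ?_)
  · obtain ⟨k, hk⟩ := hP (g⁻¹ * h)
    have hgh_pow : ((g : G)⁻¹ * h) ^ p ^ k ∈ center G := by
      convert one_mem (center G)
      exact congrArg Subtype.val hk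
    have hcop : (p ^ k).Coprime q := ((Nat.coprime_primes hp hq).2 hpq).pow_left k
    have hgh_conj : ((g : G) * y * (g : G)⁻¹)⁻¹ * ((h : G) * y * (h : G)⁻¹) ∈ center G :=
      mem_subgroupOf.1 (QuotientGroup.eq.1 hgh)
    rw [hG.centralizer_eq hx hy (mem_centralizer_singleton_iff.1 hyx).symm]
    exact mem_centralizer_singleton_iff.2
      (commute_inv_mul_of_conj_mul_conj_mem_center hcop hgh_pow hyq hgh_conj)
  · have hpow : ((g : G) * y * (g : G)⁻¹) ^ q ∈ center G := by
      rw [conj_pow]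
      exact Normal.conj_mem inferInstance _ hyq _
    exact (QuotientGroup.eq_one_iff _).2 hpow
  · have hgy : (g : G) * y * (g : G)⁻¹ ∈ center G :=
      mem_subgroupOf.1 ((QuotientGroup.eq_one_iff _).1 hg)
    rw [Normal.mem_comm_iff inferInstance, inv_mul_cancel_left] at hgy
    exact hy hgy

theorem exists_ordProj_classSize_lt (hG : IsACGroup G) {p : ℕ} (hp : p.Prime)
    (hpG : p ∣ (center G).index) :
    ∃ x ∉ center G, ∀ q, q.Prime → p ≠ q → q ∣ (center G).relIndex (centralizer {x}) →
      ordProj[p] (classSize x) < ordProj[q] ((center G).relIndex (centralizer {x})) := by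
  have := Fact.mk hp
  obtain ⟨P⟩ : Nonempty (Sylow p G) := inferInstance
  have hPZ : ¬(P : Subgroup G) ≤ center G := fun h ↦
    P.not_dvd_index (hpG.trans (index_dvd_of_le h))
  obtain ⟨x, -, hx, hPx⟩ := exists_notMem_forall_commutator_mem P.isPGroup' hPZ
  refine ⟨x, hx, fun q hq hpq hqx ↦ ?_⟩
  have hP : (P : Subgroup G) ≤ normalizer (centralizer {x} : Set G) := fun g hg ↦
    mem_normalizer_centralizer_of_commutator_mem_center (hPx g hg)
  calc ordProj[p] (classSize x)
    _ ≤ (centralizer {x}).relIndex P :=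
        Nat.le_of_dvd (Nat.pos_of_ne_zero index_ne_zero_of_finite) (ordProj_index_dvd_relIndex P _)
    _ < _ := hG.relIndex_lt_ordProj hp hq hpq P.isPGroup' hx hP hqx

end IsACGroup

section EqualClassSizes

variable [Finite G] {n : ℕ}

theorem isFGroup_of_classSize_eq (hn : ∀ x ∉ center G, classSize x = n) : IsFGroup G := by
  intro x hx y hy hle
  have hindex : (centralizer {x}).relIndex (centralizer {y}) * classSize y = classSize x :=
    relIndex_mul_index hle
  rw [hn x hx, ← hn y hy, mul_eq_right₀ (classSize_ne_zero y)] at hindex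
  exact hle.antisymm (relIndex_eq_one.1 hindex)

theorem relIndex_center_centralizer_eq (hn : ∀ x ∉ center G, classSize x = n) {x y : G}
    (hx : x ∉ center G) (hy : y ∉ center G) :
    (center G).relIndex (centralizer {x}) = (center G).relIndex (centralizer {y}) := by
  have hn₀ : 0 < n := Nat.pos_of_ne_zero (hn x hx ▸ classSize_ne_zero x)
  refine Nat.eq_of_mul_eq_mul_right hn₀ ?_
  rw [← hn x hx, relIndex_mul_classSize, hn x hx, ← hn y hy, relIndex_mul_classSize]

theorem dvd_relIndex_of_dvd_index (hn : ∀ x ∉ center G, classSize x = n) {x : G}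
    (hx : x ∉ center G) {p : ℕ} (hp : p.Prime) (hpG : p ∣ (center G).index) :
    p ∣ (center G).relIndex (centralizer {x}) := by
  rw [← relIndex_top_right] at hpG
  obtain ⟨w, -, hw, hwp⟩ := exists_mem_notMem_pow_mem hp hpG
  rw [relIndex_center_centralizer_eq hn hx hw]
  by_contra hpw
  have hcop := (hp.coprime_iff_not_dvd).2 hpw
  exact hw (mem_of_pow_mem_of_coprime hcop hwp (pow_relIndex_mem (mem_centralizer_self w)))

theorem IsACGroup.relIndex_le (hG : IsACGroup G) (hn : ∀ x ∉ center G, classSize x = n) {x : G}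
    (hx : x ∉ center G) : (center G).relIndex (centralizer {x}) ≤ n := by
  obtain ⟨y, hxy⟩ : ∃ y, ¬Commute x y := by
    by_contra! h
    exact hx (mem_center_iff.2 fun y ↦ (h y).symm)
  have hy : y ∉ center G := fun hy ↦ hxy (mem_center_iff.1 hy x)
  have hle := hG.index_center_le hxy
  rw [← relIndex_mul_classSize x, hn x hx, hn y hy] at hle
  exact Nat.le_of_mul_le_mul_right hle (Nat.pos_of_ne_zero (hn x hx ▸ classSize_ne_zero x))

theorem IsACGroup.isPrimePow_relIndex (hG : IsACGroup G) (hn : ∀ x ∉ center G, classSize x = n)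
    {x : G} (hx : x ∉ center G) : IsPrimePow ((center G).relIndex (centralizer {x})) := by
  set m := (center G).relIndex (centralizer {x})
  have hm₀ : m ≠ 0 := index_ne_zero_of_finite
  have hmn : m * n = (center G).index := hn x hx ▸ relIndex_mul_classSize x
  refine isPrimePow_of_ordProj_lt_ordProj hm₀ (relIndex_ne_one_of_notMem_center hx)
    (hG.relIndex_le hn hx) (fun p hp ↦ ?_) (fun p hp q hq hpq ↦ ?_)
  · have hpG : p ∣ (center G).index := hmn ▸ (Nat.dvd_of_mem_primeFactors hp).mul_left m
    have hp_prime := Nat.prime_of_mem_primeFactors hp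
    exact Nat.mem_primeFactors.2 ⟨hp_prime, dvd_relIndex_of_dvd_index hn hx hp_prime hpG, hm₀⟩
  · have hpG : p ∣ (center G).index := hmn ▸ (Nat.dvd_of_mem_primeFactors hp).mul_right n
    obtain ⟨z, hz, h⟩ :=
      hG.exists_ordProj_classSize_lt (Nat.prime_of_mem_primeFactors hp) hpG
    rw [hn z hz, relIndex_center_centralizer_eq hn hz hx] at h
    exact h q (Nat.prime_of_mem_primeFactors hq) hpq (Nat.dvd_of_mem_primeFactors hq)

theorem isPrimePow_relIndex (hn : ∀ x ∉ center G, classSize x = n) {x : G} (hx : x ∉ center G) :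
    IsPrimePow ((center G).relIndex (centralizer {x})) := by
  by_cases hG : IsACGroup G
  · exact hG.isPrimePow_relIndex hn hx
  · obtain ⟨y, hy, hyC⟩ : ∃ y ∉ center G, ¬IsMulCommutative (centralizer {y}) := by
      simpa only [IsACGroup, not_forall, exists_prop] using hG
    obtain ⟨p, hp, hpC⟩ :=
      ((isFGroup_of_classSize_eq hn).isMulCommutative_or_isPGroup hy).resolve_left hyC
    have := Fact.mk hp
    obtain ⟨k, hk⟩ := hpC.exists_card_eq
    rw [relIndex_center_centralizer_eq hn hx hy]
    have hk₀ : k ≠ 0 := by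
      rintro rfl
      exact relIndex_ne_one_of_notMem_center hy (hk.trans (pow_zero p))
    exact (isPrimePow_nat_iff _).2 ⟨p, k, hp, Nat.pos_of_ne_zero hk₀, hk.symm⟩

theorem exists_prime_isPGroup_quotient_center (hn : ∀ x ∉ center G, classSize x = n) {x : G}
    (hx : x ∉ center G) : ∃ p, p.Prime ∧ IsPGroup p (G ⧸ center G) := by
  obtain ⟨p, k, hp, -, hk⟩ := (isPrimePow_nat_iff _).1 (isPrimePow_relIndex hn hx)
  refine ⟨p, hp, fun c ↦ ?_⟩
  obtain ⟨w, rfl⟩ := QuotientGroup.mk_surjective c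
  refine ⟨k, ?_⟩
  rw [← QuotientGroup.mk_pow, QuotientGroup.eq_one_iff]
  by_cases hw : w ∈ center G
  · exact pow_mem hw _
  · rw [hk, relIndex_center_centralizer_eq hn hx hw]
    exact pow_relIndex_mem (mem_centralizer_self w)

end EqualClassSizes

end Group

/-- Ito (1953): if `N(G) = {1, n}` with `n > 1`, then `n` is a prime power `p^a`, `G` is
nilpotent, and `G` is the (internal) direct product of a `p`-group and an abelian group of
order coprime to `p`. -/
theorem ito_two_class_sizes {G : Type*} [Group G] [Finite G] (n : ℕ) (hn : 1 < n)
    (hN : {k : ℕ | ∃ x : G, classSize x = k} = {1, n}) :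
    ∃ p : ℕ, p.Prime ∧ (∃ a : ℕ, n = p ^ a) ∧ Group.IsNilpotent G ∧
      ∃ A B : Subgroup G, A.Normal ∧ B.Normal ∧ Disjoint A B ∧ A ⊔ B = ⊤ ∧
        IsPGroup p A ∧ (∀ a b : B, a * b = b * a) ∧ Nat.Coprime (Nat.card B) p := by
  have hclass : ∀ x : G, x ∉ center G → classSize x = n := fun x hx ↦
    (hN.subset ⟨x, rfl⟩).resolve_left fun h ↦ hx (classSize_eq_one_iff.1 h)
  obtain ⟨x, hxn⟩ : ∃ x : G, classSize x = n := hN.superset (Or.inr rfl)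
  have hx : x ∉ center G := fun h ↦ hn.ne' (hxn.symm.trans (classSize_eq_one_iff.2 h))
  obtain ⟨p, hp, hpG⟩ := exists_prime_isPGroup_quotient_center hclass hx
  have := Fact.mk hp
  obtain ⟨k, hk⟩ := hpG.exists_card_eq
  have hdvd : n ∣ p ^ k := by
    rw [← hk, ← hxn]
    exact Dvd.intro_left _ (relIndex_mul_classSize x)
  obtain ⟨a, -, ha⟩ := (Nat.dvd_prime_pow hp).1 hdvd
  obtain ⟨A, B, hA, hB, hAB, hAp, hBp⟩ := exists_isCompl_isPGroup_le_center hpG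
  have hB_normal : B.Normal :=
    ⟨fun b hb g ↦ by rwa [mem_center_iff.1 (hB hb) g, mul_inv_cancel_right]⟩
  have hB_comm (a b : B) : a * b = b * a := Subtype.ext (mem_center_iff.1 (hB b.2) a)
  exact ⟨p, hp, ⟨a, ha⟩, isNilpotent_of_isPGroup_quotient_center hpG, A, B, hA, hB_normal,
    hAB.disjoint, hAB.sup_eq_top, hAp, hB_comm, hBp⟩
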